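/- Let F = f + h be a coercive convex composite function on a real Hilbert space H, where f is convex differentiable with L-Lipschitz gradient and h is proper lower semicontinuous convex, with nonempty set of minimizers X* and minimum F*. Assume F satisfies the global quadratic growth condition G²_μ for some μ > 0: (μ/2)·d(x,X*)² ≤ F(x) − F* for all x ∈ H. Let α ≥ 3 + 3/√2 and κ = μ/L. Then there exists κ₀ > 0 such that whenever 0 < κ ≤ κ₀, the FISTA sequence (x_n) with step s = 1/L and inertial parameter α satisfies, for all n ≥ 3α/√κ: F(x_n) − F* ≤ (9/4)·e^{−2}·M₀·(8eα/(3√κ))^{2α/3}·n^{−2α/3}, where M₀ = F(x₀) − F*. -/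

import Mathlib

open Filter Metric Topology

universe u

/-! Since the proximal step minimizes a `1`-strongly convex function, the descent lemma for `f`
gives `2 / L * F (x (n + 1)) + ‖x (n + 1) - u‖ ^ 2 ≤ 2 / L * F u + ‖y n - u‖ ^ 2` for every `u`.
Taking `u = x n`, and letting `u` run over the minimizers, yields two scalar recursions for the
values `W n = 2 / L * (F (x n) - F*)`, the steps `‖x n - x (n - 1)‖` and the distances to `X*`. With
`b = α / 3`, adding `(n + 3 * b) ^ 2` times the first to `2 * b * (n + 3 * b)` times the second
gives an energy `E n`, of order `n ^ 2 * W n`, with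
`(1 + (2 * b - 2) / (n + 1)) * E (n + 1) ≤ E n + remainder`. As soon as `9 * b / √κ ≤ n`, quadratic
growth bounds the remainder by `b ^ 2 / (√κ * n * (n + 1)) * E (n + 1)`, a summable perturbation, so
`E n` decays like `n ^ (-(2 * b - 2))` from `n ≈ 9 * b / √κ` on. -/

section Calculus

variable {E : Type*} [NormedAddCommGroup E] [NormedSpace ℝ E] {f : E → ℝ} {x y : E}

lemma add_apply_sub_le_of_convexOn {S : Set E} {A : E →L[ℝ] ℝ} (hf : ConvexOn ℝ S f)
    (hA : HasFDerivAt f A x) (hx : x ∈ S) (hy : y ∈ S) : f x + A (y - x) ≤ f y := by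
  have hline : ConvexOn ℝ (AffineMap.lineMap x y ⁻¹' S) (f ∘ AffineMap.lineMap x y) :=
    hf.comp_affineMap _
  have hderiv : HasDerivAt (f ∘ AffineMap.lineMap x y) (A (y - x)) (0 : ℝ) :=
    HasFDerivAt.comp_hasDerivAt 0 (by simpa using hA) AffineMap.hasDerivAt_lineMap
  have hslope := hline.le_slope_of_hasDerivAt (by simpa using hx) (by simpa using hy)
    zero_lt_one hderiv
  simp only [slope_def_field, Function.comp_apply, AffineMap.lineMap_apply_one,
    AffineMap.lineMap_apply_zero, sub_zero, div_one] at hslope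
  linarith

lemma le_add_apply_sub_add_sq_norm_of_lipschitzWith {f' : E → E →L[ℝ] ℝ} {K : NNReal}
    (hf' : ∀ z, HasFDerivAt f (f' z) z) (hlip : LipschitzWith K f') (x y : E) :
    f y ≤ f x + f' x (y - x) + K / 2 * ‖y - x‖ ^ 2 := by
  let line : ℝ → E := AffineMap.lineMap x y
  let g : ℝ → ℝ := fun t ↦ f (line t) - (t * f' x (y - x) + K / 2 * ‖y - x‖ ^ 2 * t ^ 2)
  have hg (t : ℝ) : HasDerivAt g
      (f' (line t) (y - x) - (1 * f' x (y - x) + K / 2 * ‖y - x‖ ^ 2 * (2 * t))) t := by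
    have hfline : HasDerivAt (fun t ↦ f (line t)) (f' (line t) (y - x)) t :=
      (hf' _).comp_hasDerivAt t AffineMap.hasDerivAt_lineMap
    have hquad : HasDerivAt (fun t : ℝ ↦ t ^ 2) (2 * t) t := by simpa using hasDerivAt_pow 2 t
    exact hfline.sub (((hasDerivAt_id t).mul_const _).add (hquad.const_mul _))
  have hanti : AntitoneOn g (Set.Icc 0 1) := by
    refine antitoneOn_of_deriv_nonpos (convex_Icc 0 1)
      (fun t _ ↦ (hg t).continuousAt.continuousWithinAt)
      (fun t _ ↦ (hg t).differentiableAt.differentiableWithinAt) fun t ht ↦ ?_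
    rw [interior_Icc] at ht
    have hdist : ‖f' (line t) - f' x‖ ≤ K * (t * ‖y - x‖) := by
      have := hlip.dist_le_mul (line t) x
      rwa [dist_eq_norm, dist_lineMap_left, Real.norm_of_nonneg ht.1.le, dist_comm x y,
        dist_eq_norm] at this
    have happly : f' (line t) (y - x) - f' x (y - x) ≤ K * (t * ‖y - x‖) * ‖y - x‖ := by
      rw [← sub_apply]
      exact (le_abs_self _).trans ((f' (line t) - f' x).le_of_opNorm_le hdist _)
    rw [(hg t).deriv]
    linarith
  have hends := hanti (Set.left_mem_Icc.mpr zero_le_one) (Set.right_mem_Icc.mpr zero_le_one)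
    zero_le_one
  simp only [g, line, AffineMap.lineMap_apply_one, AffineMap.lineMap_apply_zero] at hends
  linarith

lemma add_le_of_uniformConvexOn_of_isMinOn {D : Set E} {φ : ℝ → ℝ}
    (hf : UniformConvexOn D φ f) (hmin : IsMinOn f D x) (hx : x ∈ D) (hy : y ∈ D) :
    f x + φ ‖y - x‖ ≤ f y := by
  have hsegment : ∀ t ∈ Set.Ioo (0 : ℝ) 1, (1 - t) * φ ‖y - x‖ ≤ f y - f x := by
    intro t ht
    have hconv := hf.2 hy hx ht.1.le (sub_nonneg.mpr ht.2.le) (add_sub_cancel t 1)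
    have hle : f x ≤ f (t • y + (1 - t) • x) := isMinOn_iff.mp hmin _
      (hf.1 hy hx ht.1.le (sub_nonneg.mpr ht.2.le) (add_sub_cancel t 1))
    simp only [smul_eq_mul] at hconv
    refine le_of_mul_le_mul_left ?_ ht.1
    linarith
  have hlim : Tendsto (fun t : ℝ ↦ (1 - t) * φ ‖y - x‖) (𝓝[>] 0) (𝓝 (φ ‖y - x‖)) := by
    have hcont : Continuous fun t : ℝ ↦ (1 - t) * φ ‖y - x‖ := by fun_prop
    simpa using (hcont.tendsto 0).mono_left nhdsWithin_le_nhds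
  have := le_of_tendsto hlim (eventually_of_mem (Ioo_mem_nhdsGT zero_lt_one) hsegment)
  linarith

end Calculus

lemma le_infDist_sq {X : Type*} [PseudoMetricSpace X] {S : Set X} {x : X} {c : ℝ}
    (hS : S.Nonempty) (h : ∀ p ∈ S, c ≤ dist x p ^ 2) : c ≤ infDist x S ^ 2 := by
  rw [← Real.sqrt_le_left infDist_nonneg, le_infDist hS]
  exact fun p hp ↦ (Real.sqrt_le_left dist_nonneg).mpr (h p hp)

section InnerProductSpace

variable {H : Type*} [NormedAddCommGroup H] [InnerProductSpace ℝ H]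

lemma strongConvexOn_add_half_sq_norm_sub {D : Set H} {g : H → ℝ} (hg : ConvexOn ℝ D g) (z : H) :
    StrongConvexOn D 1 fun w ↦ g w + ‖w - z‖ ^ 2 / 2 := by
  rw [strongConvexOn_iff_convex]
  have hlin : ConvexOn ℝ D fun w ↦ -innerSL ℝ z w + ‖z‖ ^ 2 / 2 :=
    ((-innerSL ℝ z : H →L[ℝ] ℝ).toLinearMap.convexOn hg.1).add_const _
  refine (hg.add hlin).congr fun w _ ↦ ?_
  simp only [Pi.add_apply, innerSL_apply_apply, norm_sub_sq_real, real_inner_comm z w]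
  ring

lemma sq_norm_add_smul_sub_sub (x x₀ p : H) (a : ℝ) :
    ‖x + a • (x - x₀) - p‖ ^ 2
      = (1 + a) * ‖x - p‖ ^ 2 - a * ‖x₀ - p‖ ^ 2 + (a + a ^ 2) * ‖x - x₀‖ ^ 2 := by
  have hx₀ : x₀ - p = (x - p) - (x - x₀) := by abel
  rw [show x + a • (x - x₀) - p = (x - p) + a • (x - x₀) by abel, hx₀, norm_add_sq_real,
    norm_sub_sq_real (x - p), inner_smul_right, norm_smul, mul_pow, Real.norm_eq_abs, sq_abs]
  ring

/- Averaging over a single `p` and then taking the infimum avoids choosing a projection onto `X`,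
which need not be closed. -/
lemma add_infDist_sq_sub_le_of_extrapolation {X : Set H} (hX : X.Nonempty) {W a : ℝ} (ha : 0 ≤ a)
    {x₀ x₁ x₂ : H} (h : ∀ p ∈ X, W + ‖x₂ - p‖ ^ 2 ≤ ‖x₁ + a • (x₁ - x₀) - p‖ ^ 2) :
    W + (infDist x₂ X ^ 2 - infDist x₁ X ^ 2) ≤
      a * (infDist x₁ X ^ 2 - infDist x₀ X ^ 2) + (a + a ^ 2) * ‖x₁ - x₀‖ ^ 2 := by
  have hdist (x : H) {p : H} (hp : p ∈ X) : infDist x X ^ 2 ≤ ‖x - p‖ ^ 2 := by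
    rw [← dist_eq_norm]
    exact pow_le_pow_left₀ infDist_nonneg (infDist_le_dist_of_mem hp) 2
  have hinf : (W + infDist x₂ X ^ 2 + a * infDist x₀ X ^ 2 - (a + a ^ 2) * ‖x₁ - x₀‖ ^ 2) / (1 + a)
      ≤ infDist x₁ X ^ 2 := by
    refine le_infDist_sq hX fun p hp ↦ ?_
    have hp₀ := mul_le_mul_of_nonneg_left (hdist x₀ hp) ha
    have hp₂ := h p hp
    rw [sq_norm_add_smul_sub_sub] at hp₂
    rw [div_le_iff₀ (by positivity), dist_eq_norm]
    linarith [hdist x₂ hp]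
  rw [div_le_iff₀ (by positivity)] at hinf
  linarith

lemma forward_backward_le {D : Set H} {f h : H → ℝ} {f' : H → H} {L : ℝ} {p u y : H}
    (hL : 0 < L) (hf : ConvexOn ℝ Set.univ f) (hf' : ∀ z, HasFDerivAt f (innerSL ℝ (f' z)) z)
    (hlip : LipschitzWith (Real.toNNReal L) f') (hh : ConvexOn ℝ D h) (hp : p ∈ D)
    (hmin : IsMinOn (fun w ↦ 1 / L * h w + ‖w - (y - (1 / L) • f' y)‖ ^ 2 / 2) D p) (hu : u ∈ D) :
    2 / L * (f p + h p) + ‖p - u‖ ^ 2 ≤ 2 / L * (f u + h u) + ‖y - u‖ ^ 2 := by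
  have hlip' : LipschitzWith (Real.toNNReal L) fun z ↦ innerSL ℝ (f' z) :=
    LipschitzWith.of_dist_le_mul fun v w ↦ by
      rw [dist_eq_norm, ← map_sub, innerSL_apply_norm, ← dist_eq_norm]
      exact hlip.dist_le_mul v w
  have hsmooth := le_add_apply_sub_add_sq_norm_of_lipschitzWith hf' hlip' y p
  have hconvex := add_apply_sub_le_of_convexOn hf (hf' y) (Set.mem_univ y) (Set.mem_univ u)
  have hprox := add_le_of_uniformConvexOn_of_isMinOn
    (strongConvexOn_add_half_sq_norm_sub (hh.smul (one_div_pos.mpr hL).le) _) hmin hp hu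
  have hexpand (w : H) : ‖w - (y - (1 / L) • f' y)‖ ^ 2
      = ‖w - y‖ ^ 2 + 2 * (1 / L * inner ℝ (f' y) (w - y)) + ‖(1 / L) • f' y‖ ^ 2 := by
    rw [show w - (y - (1 / L) • f' y) = (w - y) + (1 / L) • f' y by abel, norm_add_sq_real,
      inner_smul_right, real_inner_comm]
  simp only [hexpand, smul_eq_mul] at hprox
  simp only [innerSL_apply_apply, Real.coe_toNNReal L hL.le] at hsmooth hconvex
  have hmodel : 1 / L * (f p - f u) ≤
      1 / L * (inner ℝ (f' y) (p - y) - inner ℝ (f' y) (u - y) + L / 2 * ‖p - y‖ ^ 2) :=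
    mul_le_mul_of_nonneg_left (by linarith) (one_div_pos.mpr hL).le
  have hcancel : 1 / L * (L / 2 * ‖p - y‖ ^ 2) = ‖p - y‖ ^ 2 / 2 := by field_simp
  rw [norm_sub_rev p u, norm_sub_rev y u, ← mul_one_div 2 L]
  linarith

end InnerProductSpace

section Decay

lemma sub_sq_le_log_one_add {x : ℝ} (hx : 0 ≤ x) : x - x ^ 2 ≤ Real.log (1 + x) := by
  refine le_trans ?_ (Real.one_sub_inv_le_log_of_pos (by positivity))
  rw [show 1 - (1 + x)⁻¹ = x / (1 + x) by field_simp; ring, le_div_iff₀ (by positivity)]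
  linarith [pow_nonneg hx 3]

lemma log_add_one_le_log_add_inv {t : ℝ} (ht : 0 < t) : Real.log (t + 1) ≤ Real.log t + 1 / t := by
  have h := Real.log_le_sub_one_of_pos (show 0 < (t + 1) / t by positivity)
  rw [Real.log_div (by positivity) ht.ne', add_div, div_self ht.ne'] at h
  linarith

/- The factor `exp (c / t)` absorbs both the error `d / (t * (t + 1))` and the second-order terms of
`((t + 1) / t) ^ p`, as `c / t - c / (t + 1) = c / (t * (t + 1))`. -/
lemma rpow_mul_exp_le_mul_rpow_mul_exp {p c d t : ℝ} (hp : 0 ≤ p) (hd : 0 ≤ d) (ht : 0 < t)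
    (hdt : d ≤ p * t) (hc : d + p + p ^ 2 ≤ c) :
    (t + 1) ^ p * Real.exp (c / (t + 1)) ≤
      (1 + (p / (t + 1) - d / (t * (t + 1)))) * (t ^ p * Real.exp (c / t)) := by
  set x := p / (t + 1) - d / (t * (t + 1)) with hx
  have hx_nonneg : 0 ≤ x := by
    rw [hx, sub_nonneg, div_le_div_iff₀ (by positivity) (by positivity)]
    linarith [mul_le_mul_of_nonneg_right hdt (show 0 ≤ t + 1 by positivity)]
  have hx_sq : x ^ 2 ≤ p ^ 2 / (t * (t + 1)) := calc
    x ^ 2 ≤ (p / (t + 1)) ^ 2 := pow_le_pow_left₀ hx_nonneg (sub_le_self _ (by positivity)) 2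
    _ = p ^ 2 / ((t + 1) * (t + 1)) := by rw [div_pow, sq (t + 1)]
    _ ≤ p ^ 2 / (t * (t + 1)) := by gcongr; linarith
  have habsorb : p * (1 / t) + c / (t + 1) - c / t ≤ x - p ^ 2 / (t * (t + 1)) := by
    have hgap : x - p ^ 2 / (t * (t + 1)) - (p * (1 / t) + c / (t + 1) - c / t)
        = (c - (d + p + p ^ 2)) / (t * (t + 1)) := by
      rw [hx]
      field_simp
      ring
    have : 0 ≤ (c - (d + p + p ^ 2)) / (t * (t + 1)) := div_nonneg (by linarith) (by positivity)
    linarith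
  have hlog : Real.log (t + 1) * p + c / (t + 1) ≤
      Real.log (1 + x) + (Real.log t * p + c / t) := by
    have := mul_le_mul_of_nonneg_right (log_add_one_le_log_add_inv ht) hp
    linarith [sub_sq_le_log_one_add hx_nonneg]
  have hexp := Real.exp_le_exp.mpr hlog
  rwa [Real.exp_add, Real.exp_add, Real.exp_add, Real.exp_log (by positivity),
    ← Real.rpow_def_of_pos ht, ← Real.rpow_def_of_pos (by positivity)] at hexp

lemma rpow_mul_le_exp_mul_of_succ_le {p c d : ℝ} {k : ℕ} {E : ℕ → ℝ} (hp : 0 ≤ p) (hd : 0 ≤ d)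
    (hk : 0 < k) (hdk : d ≤ p * k) (hc : d + p + p ^ 2 ≤ c) (hE : ∀ n ≥ k, 0 ≤ E n)
    (hstep : ∀ n : ℕ, k ≤ n →
      (1 + (p / (n + 1) - d / (n * (n + 1)))) * E (n + 1) ≤ E n) {n : ℕ} (hn : k ≤ n) :
    (n : ℝ) ^ p * E n ≤ Real.exp (c / k) * ((k : ℝ) ^ p * E k) := by
  have hanti : (n : ℝ) ^ p * Real.exp (c / n) * E n ≤ (k : ℝ) ^ p * Real.exp (c / k) * E k := by
    induction n, hn using Nat.le_induction with
    | base => exact le_rfl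
    | succ n hn ih =>
      have hkn : (k : ℝ) ≤ n := by exact_mod_cast hn
      have hn0 : (0 : ℝ) < n := by exact_mod_cast hk.trans_le hn
      have hweight := rpow_mul_exp_le_mul_rpow_mul_exp hp hd hn0
        (hdk.trans (mul_le_mul_of_nonneg_left hkn hp)) hc
      push_cast
      calc _ ≤ _ := mul_le_mul_of_nonneg_right hweight (hE (n + 1) (hn.trans n.le_succ))
        _ = (n : ℝ) ^ p * Real.exp (c / n) *
            ((1 + (p / (n + 1) - d / (n * (n + 1)))) * E (n + 1)) := by ring
        _ ≤ (n : ℝ) ^ p * Real.exp (c / n) * E n :=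
          mul_le_mul_of_nonneg_left (hstep n hn) (by positivity)
        _ ≤ _ := ih
  have hc0 : 0 ≤ c := by linarith [sq_nonneg p]
  calc (n : ℝ) ^ p * E n ≤ (n : ℝ) ^ p * E n * Real.exp (c / n) :=
        le_mul_of_one_le_right (mul_nonneg (by positivity) (hE n hn))
          (Real.one_le_exp (by positivity))
    _ = (n : ℝ) ^ p * Real.exp (c / n) * E n := by ring
    _ ≤ (k : ℝ) ^ p * Real.exp (c / k) * E k := hanti
    _ = _ := by ring

lemma exp_mul_rpow_le_of_le_exp_mul {b t u : ℝ} (hb : 4 / 3 ≤ b) (ht : 0 ≤ t) (hu : 0 ≤ u)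
    (hut : u ≤ Real.exp (1 / 6) * t) :
    Real.exp (b / 9) * u ^ (2 * b) ≤ Real.exp (-2) * (Real.exp 1 * t) ^ (2 * b) := by
  have hmul (c d : ℝ) : Real.exp d * (Real.exp c * t) ^ (2 * b) =
      Real.exp (d + c * (2 * b)) * t ^ (2 * b) := by
    rw [Real.mul_rpow (by positivity) ht, ← Real.exp_mul, Real.exp_add, mul_assoc]
  calc Real.exp (b / 9) * u ^ (2 * b)
      ≤ Real.exp (b / 9) * (Real.exp (1 / 6) * t) ^ (2 * b) := by gcongr
    _ = Real.exp (b / 9 + 1 / 6 * (2 * b)) * t ^ (2 * b) := hmul _ _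
    _ ≤ Real.exp (-2 + 1 * (2 * b)) * t ^ (2 * b) :=
      mul_le_mul_of_nonneg_right (Real.exp_le_exp.mpr (by linarith)) (by positivity)
    _ = Real.exp (-2) * (Real.exp 1 * t) ^ (2 * b) := (hmul _ _).symm

end Decay

/-- The scalar inequalities behind the convergence rate of FISTA with inertial parameter `3 * b`:
`W n` stands for `2 / L * (F (x n) - F*)`, `s n` for `‖x n - x (n - 1)‖`, `r n` for the distance of
`x n` to the set of minimizers, and `q` for `1 / √κ`. -/
structure FISTAEstimates (b q : ℝ) (W s r : ℕ → ℝ) : Prop where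
  step_zero : s 0 = 0
  dist_nonneg (n : ℕ) : 0 ≤ r n
  abs_dist_sub_le (n : ℕ) : |r n - r (n - 1)| ≤ s n
  growth (n : ℕ) : r n ^ 2 ≤ q ^ 2 * W n
  descent (n : ℕ) : W (n + 1) + s (n + 1) ^ 2 ≤ W n + ((n : ℝ) / (n + 3 * b)) ^ 2 * s n ^ 2
  dist_sq_le (n : ℕ) : W (n + 1) + (r (n + 1) ^ 2 - r n ^ 2) ≤
    (n : ℝ) / (n + 3 * b) * (r n ^ 2 - r (n - 1) ^ 2) +
      ((n : ℝ) / (n + 3 * b) + ((n : ℝ) / (n + 3 * b)) ^ 2) * s n ^ 2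

/-- The Lyapunov energy of FISTA, in the notation of `FISTAEstimates`. It is comparable to
`n ^ 2 * W n` and decays like `n ^ (-(2 * b - 2))`. -/
def fistaEnergy (b : ℝ) (W s r : ℕ → ℝ) (n : ℕ) : ℝ :=
  (n + 3 * b) ^ 2 * W n + (n ^ 2 + 4 * b * n) * s n ^ 2
    + 2 * b * n * (r n ^ 2 - r (n - 1) ^ 2) + 2 * b * (1 + b) * r n ^ 2

namespace FISTAEstimates

variable {b q : ℝ} {W s r : ℕ → ℝ}

lemma value_nonneg (h : FISTAEstimates b q W s r) (hq : 0 < q) (n : ℕ) : 0 ≤ W n :=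
  nonneg_of_mul_nonneg_right ((sq_nonneg _).trans (h.growth n)) (by positivity)

lemma abs_dist_sq_sub_le (h : FISTAEstimates b q W s r) (n : ℕ) :
    |r n ^ 2 - r (n - 1) ^ 2| ≤ 2 * r n * s n + s n ^ 2 := by
  have hsub := abs_le.mp (h.abs_dist_sub_le n)
  have hr := h.dist_nonneg n
  rw [abs_le]
  constructor <;> nlinarith

lemma value_add_step_sq_le (h : FISTAEstimates b q W s r) (hb : 0 ≤ b) (n : ℕ) :
    W n + s n ^ 2 ≤ W 0 := by
  induction n with
  | zero => simp [h.step_zero]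
  | succ n ih =>
    have hinertia : ((n : ℝ) / (n + 3 * b)) ^ 2 ≤ 1 :=
      pow_le_one₀ (by positivity) (div_le_one_of_le₀ (by linarith) (by positivity))
    linarith [h.descent n, mul_le_of_le_one_left (sq_nonneg (s n)) hinertia]

lemma sq_mul_descent (h : FISTAEstimates b q W s r) (hb : 0 < b) (n : ℕ) :
    (n + 3 * b) ^ 2 * (W (n + 1) + s (n + 1) ^ 2) ≤ (n + 3 * b) ^ 2 * W n + n ^ 2 * s n ^ 2 := by
  have hden : (n : ℝ) + 3 * b ≠ 0 := by positivity
  calc _ ≤ (n + 3 * b) ^ 2 * (W n + ((n : ℝ) / (n + 3 * b)) ^ 2 * s n ^ 2) :=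
        mul_le_mul_of_nonneg_left (h.descent n) (sq_nonneg _)
    _ = (n + 3 * b) ^ 2 * W n + n ^ 2 * s n ^ 2 := by field_simp

lemma mul_dist_sq_le (h : FISTAEstimates b q W s r) (hb : 0 < b) (n : ℕ) :
    (n + 3 * b) * (W (n + 1) + (r (n + 1) ^ 2 - r n ^ 2)) ≤
      n * (r n ^ 2 - r (n - 1) ^ 2) + 2 * n * s n ^ 2 := by
  have hden : 0 < (n : ℝ) + 3 * b := by positivity
  set a := (n : ℝ) / (n + 3 * b) with ha
  have ha1 : a ≤ 1 := div_le_one_of_le₀ (by linarith) hden.le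
  calc _ ≤ (n + 3 * b) * (a * (r n ^ 2 - r (n - 1) ^ 2) + (a + a ^ 2) * s n ^ 2) :=
        mul_le_mul_of_nonneg_left (h.dist_sq_le n) hden.le
    _ = (n + 3 * b) * a * (r n ^ 2 - r (n - 1) ^ 2) + (n + 3 * b) * a * (1 + a) * s n ^ 2 := by ring
    _ = n * (r n ^ 2 - r (n - 1) ^ 2) + n * (1 + a) * s n ^ 2 := by
        rw [ha, mul_div_cancel₀ _ hden.ne']
    _ ≤ n * (r n ^ 2 - r (n - 1) ^ 2) + n * (1 + 1) * s n ^ 2 := by gcongr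
    _ = n * (r n ^ 2 - r (n - 1) ^ 2) + 2 * n * s n ^ 2 := by ring

lemma mul_energy_succ_le (h : FISTAEstimates b q W s r) (hb : 0 < b) (n : ℕ) :
    (1 + (2 * b - 2) / (n + 1)) * fistaEnergy b W s r (n + 1) ≤
      fistaEnergy b W s r n + (4 * b * (b ^ 2 - 1) / (n + 1) * r (n + 1) ^ 2 +
        ((2 * b - 2) * (3 * b) * (n + 1 + 3 * b) / (n + 1) + 2 * b - 1) * W (n + 1)) := by
  have hsucc : (1 + (2 * b - 2) / (n + 1)) * fistaEnergy b W s r (n + 1) =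
      (n + 3 * b) ^ 2 * (W (n + 1) + s (n + 1) ^ 2) +
        2 * b * ((n + 3 * b) * (W (n + 1) + (r (n + 1) ^ 2 - r n ^ 2))) +
        2 * b * (1 + b) * r n ^ 2 - (b + 1) ^ 2 * s (n + 1) ^ 2 +
        (4 * b * (b ^ 2 - 1) / (n + 1) * r (n + 1) ^ 2 +
          ((2 * b - 2) * (3 * b) * (n + 1 + 3 * b) / (n + 1) + 2 * b - 1) * W (n + 1)) := by
    rw [fistaEnergy, Nat.add_sub_cancel]
    push_cast
    field_simp
    ring
  have hdist := mul_le_mul_of_nonneg_left (h.mul_dist_sq_le hb n) (show 0 ≤ 2 * b by positivity)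
  rw [hsucc, fistaEnergy]
  linarith [h.sq_mul_descent hb n, mul_nonneg (sq_nonneg (b + 1)) (sq_nonneg (s (n + 1)))]

lemma sq_mul_value_sub_le_energy (h : FISTAEstimates b q W s r) (hb : 0 ≤ b) (hq : 0 < q) (n : ℕ) :
    n ^ 2 * W n - 2 * b * (b - 1) * r n ^ 2 ≤ fistaEnergy b W s r n := by
  have hcross := mul_le_mul_of_nonneg_left (abs_le.mp (h.abs_dist_sq_sub_le n)).1
    (show 0 ≤ 2 * b * n by positivity)
  have hvalue : (n : ℝ) ^ 2 * W n ≤ (n + 3 * b) ^ 2 * W n := by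
    have := h.value_nonneg hq n
    gcongr
    linarith
  have hslack : 0 ≤ (n * s n - 2 * b * r n) ^ 2 + 2 * b * n * s n ^ 2 := by positivity
  rw [fistaEnergy]
  linarith

lemma mul_sq_mul_value_le_energy (h : FISTAEstimates b q W s r) (hb : 1 ≤ b) (hq : 0 < q) {n : ℕ}
    (hn : 9 * b * q ≤ n) : 9 / 10 * n ^ 2 * W n ≤ fistaEnergy b W s r n := by
  have hW := h.value_nonneg hq n
  have hcoef : 2 * (b * q) ^ 2 ≤ 1 / 10 * (n : ℝ) ^ 2 := by
    have : (9 * b * q) ^ 2 ≤ (n : ℝ) ^ 2 := by gcongr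
    linarith [sq_nonneg (b * q)]
  have hdist : 2 * b * (b - 1) * r n ^ 2 ≤ 1 / 10 * n ^ 2 * W n := calc
    2 * b * (b - 1) * r n ^ 2 ≤ 2 * b * b * (q ^ 2 * W n) := by
      gcongr
      · linarith
      · exact h.growth n
    _ = 2 * (b * q) ^ 2 * W n := by ring
    _ ≤ 1 / 10 * n ^ 2 * W n := mul_le_mul_of_nonneg_right hcoef hW
  linarith [h.sq_mul_value_sub_le_energy (by linarith) hq n]

lemma energy_le (h : FISTAEstimates b q W s r) (hb : 1 ≤ b) (hq : 100 ≤ q) {n : ℕ}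
    (hn : 9 * b * q ≤ n) : fistaEnergy b W s r n ≤ 2 * n ^ 2 * W 0 := by
  have hq0 : 0 < q := by linarith
  have hW := h.value_nonneg hq0 n
  have hbn : 900 * b ≤ n := by nlinarith
  have hbq : 0 < b * q := by positivity
  have hcross : 2 * r n * s n ≤ q * (W n + s n ^ 2) := by
    refine le_of_mul_le_mul_left ?_ hq0
    linarith [h.growth n, sq_nonneg (r n - q * s n)]
  have hdist : r n ^ 2 - r (n - 1) ^ 2 ≤ q * (W n + s n ^ 2) + s n ^ 2 :=
    (le_of_abs_le (h.abs_dist_sq_sub_le n)).trans (by linarith)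
  have hdist_sq : 2 * b * (1 + b) * r n ^ 2 ≤ 4 * (b * q) ^ 2 * W n := calc
    2 * b * (1 + b) * r n ^ 2 ≤ 2 * b * (b + b) * (q ^ 2 * W n) := by
      gcongr
      exact h.growth n
    _ = 4 * (b * q) ^ 2 * W n := by ring
  have hcoef_value : (n + 3 * b) ^ 2 + 2 * n * (b * q) + 4 * (b * q) ^ 2 ≤ 2 * (n : ℝ) ^ 2 := by
    nlinarith
  have hcoef_step : n ^ 2 + 4 * b * n + 2 * n * (b * q) + 2 * b * n ≤ 2 * (n : ℝ) ^ 2 := by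
    nlinarith
  calc fistaEnergy b W s r n
      ≤ (n + 3 * b) ^ 2 * W n + (n ^ 2 + 4 * b * n) * s n ^ 2
        + 2 * b * n * (q * (W n + s n ^ 2) + s n ^ 2) + 4 * (b * q) ^ 2 * W n := by
        rw [fistaEnergy]
        gcongr
    _ = ((n + 3 * b) ^ 2 + 2 * n * (b * q) + 4 * (b * q) ^ 2) * W n
        + (n ^ 2 + 4 * b * n + 2 * n * (b * q) + 2 * b * n) * s n ^ 2 := by ring
    _ ≤ 2 * n ^ 2 * W n + 2 * n ^ 2 * s n ^ 2 := by gcongr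
    _ = 2 * n ^ 2 * (W n + s n ^ 2) := by ring
    _ ≤ 2 * n ^ 2 * W 0 := by
        gcongr
        exact h.value_add_step_sq_le (by linarith) n

lemma remainder_le (h : FISTAEstimates b q W s r) (hb : 1 ≤ b) (hq : 100 ≤ q) {n : ℕ}
    (hn : 9 * b * q ≤ n) :
    4 * b * (b ^ 2 - 1) / (n + 1) * r (n + 1) ^ 2 +
        ((2 * b - 2) * (3 * b) * (n + 1 + 3 * b) / (n + 1) + 2 * b - 1) * W (n + 1) ≤
      3 / 5 * b ^ 2 * q / (n * (n + 1)) * fistaEnergy b W s r (n + 1) := by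
  have hq0 : 0 < q := by linarith
  have hW := h.value_nonneg hq0 (n + 1)
  have hbn : 900 * b ≤ n := by nlinarith
  have hn0 : (0 : ℝ) < n := by linarith
  have hdist : 4 * b * (b ^ 2 - 1) / (n + 1) * r (n + 1) ^ 2 ≤ 4 / 9 * b ^ 2 * q * W (n + 1) := calc
    _ ≤ 4 * b * b ^ 2 / (9 * b * q) * (q ^ 2 * W (n + 1)) := by
      gcongr
      · linarith
      · linarith
      · exact h.growth (n + 1)
    _ = 4 / 9 * b ^ 2 * q * W (n + 1) := by field_simp
  have hcoef : (2 * b - 2) * (3 * b) * (n + 1 + 3 * b) / (n + 1) + 2 * b - 1 ≤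
      7 / 100 * b ^ 2 * q := by
    have : (2 * b - 2) * (3 * b) * (n + 1 + 3 * b) / (n + 1) ≤ (2 * b - 2) * (3 * b) * (7 / 6) := by
      rw [div_le_iff₀ (by positivity), mul_assoc _ (7 / 6 : ℝ)]
      exact mul_le_mul_of_nonneg_left (by linarith) (mul_nonneg (by linarith) (by linarith))
    nlinarith [mul_le_mul_of_nonneg_left hq (sq_nonneg b)]
  have henergy : 9 / 10 * (n + 1) ^ 2 * W (n + 1) ≤ fistaEnergy b W s r (n + 1) := by
    have := h.mul_sq_mul_value_le_energy hb hq0 (n := n + 1) (by push_cast; linarith)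
    exact_mod_cast this
  calc _ ≤ 4 / 9 * b ^ 2 * q * W (n + 1) + 7 / 100 * b ^ 2 * q * W (n + 1) :=
        add_le_add hdist (mul_le_mul_of_nonneg_right hcoef hW)
    _ ≤ 27 / 50 * (b ^ 2 * q * W (n + 1)) := by
        linarith [show 0 ≤ b ^ 2 * q * W (n + 1) by positivity]
    _ = 3 / 5 * b ^ 2 * q / ((n + 1) * (n + 1)) * (9 / 10 * (n + 1) ^ 2 * W (n + 1)) := by
        field_simp
        ring
    _ ≤ 3 / 5 * b ^ 2 * q / (n * (n + 1)) * fistaEnergy b W s r (n + 1) := by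
        gcongr
        linarith

lemma rpow_mul_energy_le (h : FISTAEstimates b q W s r) (hb : 4 / 3 ≤ b) (hq : 100 ≤ q) {k n : ℕ}
    (hk : 9 * b * q ≤ k) (hn : k ≤ n) :
    (n : ℝ) ^ (2 * b - 2) * fistaEnergy b W s r n ≤
      Real.exp (b ^ 2 * q / k) * ((k : ℝ) ^ (2 * b - 2) * fistaEnergy b W s r k) := by
  have hb1 : 1 ≤ b := by linarith
  have hq0 : 0 < q := by linarith
  have hk0 : 0 < k := Nat.cast_pos.mp (lt_of_lt_of_le (by positivity) hk)
  have hge {m : ℕ} (hm : k ≤ m) : 9 * b * q ≤ m := hk.trans (by exact_mod_cast hm)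
  refine rpow_mul_le_exp_mul_of_succ_le (d := 3 / 5 * b ^ 2 * q) (by linarith) (by positivity) hk0
    ?_ ?_ (fun m hm ↦ ?_) (fun m hm ↦ ?_) hn
  · calc 3 / 5 * b ^ 2 * q ≤ (2 * b - 2) * (9 * b * q) := by
          nlinarith [show 0 < b * q by positivity]
      _ ≤ (2 * b - 2) * k := mul_le_mul_of_nonneg_left hk (by linarith)
  · nlinarith [mul_le_mul_of_nonneg_left hq (sq_nonneg b)]
  · have := h.value_nonneg hq0 m
    exact le_trans (by positivity) (h.mul_sq_mul_value_le_energy hb1 hq0 (hge hm))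
  · linarith [h.mul_energy_succ_le (by linarith) m, h.remainder_le hb1 hq (hge hm)]

lemma rpow_mul_value_le (h : FISTAEstimates b q W s r) (hb : 4 / 3 ≤ b) (hq : 100 ≤ q) {k n : ℕ}
    (hk : 9 * b * q ≤ k) (hn : k ≤ n) :
    (n : ℝ) ^ (2 * b) * W n ≤ 9 / 4 * Real.exp (b / 9) * (k : ℝ) ^ (2 * b) * W 0 := by
  have hb1 : 1 ≤ b := by linarith
  have hq0 : 0 < q := by linarith
  have hW0 := h.value_nonneg hq0 0
  have hk0 : (0 : ℝ) < k := lt_of_lt_of_le (by positivity) hk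
  have hkn : (k : ℝ) ≤ n := by exact_mod_cast hn
  have hpow {t : ℝ} (ht : 0 < t) : t ^ (2 * b) = t ^ (2 * b - 2) * t ^ 2 := by
    rw [← Real.rpow_natCast t 2, ← Real.rpow_add ht]
    norm_num
  have hexp : Real.exp (b ^ 2 * q / k) ≤ Real.exp (b / 9) := by
    rw [Real.exp_le_exp, div_le_div_iff₀ hk0 (by norm_num)]
    nlinarith
  have hdecay : 9 / 10 * ((n : ℝ) ^ (2 * b) * W n) ≤
      2 * (Real.exp (b / 9) * (k : ℝ) ^ (2 * b) * W 0) := calc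
    _ = (n : ℝ) ^ (2 * b - 2) * (9 / 10 * n ^ 2 * W n) := by rw [hpow (hk0.trans_le hkn)]; ring
    _ ≤ (n : ℝ) ^ (2 * b - 2) * fistaEnergy b W s r n := by
      gcongr
      exact h.mul_sq_mul_value_le_energy hb1 hq0 (hk.trans hkn)
    _ ≤ Real.exp (b ^ 2 * q / k) * ((k : ℝ) ^ (2 * b - 2) * fistaEnergy b W s r k) :=
      h.rpow_mul_energy_le hb hq hk hn
    _ ≤ Real.exp (b / 9) * ((k : ℝ) ^ (2 * b - 2) * (2 * k ^ 2 * W 0)) := by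
      have hEk : 0 ≤ fistaEnergy b W s r k :=
        le_trans (mul_nonneg (by positivity) (h.value_nonneg hq0 k))
          (h.mul_sq_mul_value_le_energy hb1 hq0 hk)
      gcongr
      exact h.energy_le hb1 hq hk
    _ = 2 * (Real.exp (b / 9) * (k : ℝ) ^ (2 * b) * W 0) := by rw [hpow hk0]; ring
  linarith [show 0 ≤ Real.exp (b / 9) * (k : ℝ) ^ (2 * b) * W 0 by positivity]

lemma value_le (h : FISTAEstimates b q W s r) (hb : 4 / 3 ≤ b) (hq : 100 ≤ q) {n : ℕ}
    (hn : 9 * b * q ≤ n) :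
    W n ≤ 9 / 4 * Real.exp (-2) * W 0 * (8 * Real.exp 1 * b * q) ^ (2 * b) *
      (n : ℝ) ^ (-(2 * b)) := by
  have hq0 : 0 < q := by linarith
  have hW0 := h.value_nonneg hq0 0
  have hbq : 100 ≤ b * q := by nlinarith
  have hn0 : (0 : ℝ) < n := by linarith
  set k := ⌈9 * b * q⌉₊
  have hk : (k : ℝ) ≤ Real.exp (1 / 6) * (8 * b * q) := calc
    (k : ℝ) ≤ 9 * b * q + 1 := (Nat.ceil_lt_add_one (by positivity)).le
    _ ≤ (1 / 6 + 1) * (8 * b * q) := by linarith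
    _ ≤ Real.exp (1 / 6) * (8 * b * q) := by gcongr; exact Real.add_one_le_exp _
  have hconst := exp_mul_rpow_le_of_le_exp_mul hb (by positivity) k.cast_nonneg hk
  rw [show Real.exp 1 * (8 * b * q) = 8 * Real.exp 1 * b * q by ring] at hconst
  rw [Real.rpow_neg hn0.le, ← div_eq_mul_inv, le_div_iff₀ (by positivity)]
  calc W n * (n : ℝ) ^ (2 * b) = (n : ℝ) ^ (2 * b) * W n := mul_comm _ _
    _ ≤ 9 / 4 * Real.exp (b / 9) * (k : ℝ) ^ (2 * b) * W 0 :=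
      h.rpow_mul_value_le hb hq (Nat.le_ceil _) (Nat.ceil_le.mpr hn)
    _ = 9 / 4 * W 0 * (Real.exp (b / 9) * (k : ℝ) ^ (2 * b)) := by ring
    _ ≤ 9 / 4 * W 0 * (Real.exp (-2) * (8 * Real.exp 1 * b * q) ^ (2 * b)) := by gcongr
    _ = _ := by ring

end FISTAEstimates

section FISTA

variable {H : Type*} [NormedAddCommGroup H] [InnerProductSpace ℝ H]

/-- The inertial extrapolation `y n = x n + n / (n + α) * (x n - x (n - 1))` of FISTA. As
`0 - 1 = 0` in `ℕ`, it gives `y 0 = x 0`, which is the convention `x (-1) = x 0`. -/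
noncomputable def fistaExtrapolation (α : ℝ) (x : ℕ → H) (n : ℕ) : H :=
  x n + ((n : ℝ) / (n + α)) • (x n - x (n - 1))

/-- `x` is a FISTA sequence with step `s` and inertial parameter `α` for the sum of a smooth
function with gradient `f'` and of a function `h` with effective domain `D`: extended-valued convex
functions are encoded by their real-valued restriction to `D`, and the proximal point is
characterized as a minimizer over `D`. -/
structure IsFISTA (D : Set H) (h : H → ℝ) (f' : H → H) (s α : ℝ) (x : ℕ → H) : Prop where
  mem (n : ℕ) : x n ∈ D
  isMinOn (n : ℕ) : IsMinOn (fun w ↦ s * h w +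
    ‖w - (fistaExtrapolation α x n - s • f' (fistaExtrapolation α x n))‖ ^ 2 / 2) D (x (n + 1))

lemma sq_norm_fistaExtrapolation_sub (α : ℝ) (x : ℕ → H) (n : ℕ) :
    ‖fistaExtrapolation α x n - x n‖ ^ 2 = ((n : ℝ) / (n + α)) ^ 2 * ‖x n - x (n - 1)‖ ^ 2 := by
  rw [fistaExtrapolation, add_sub_cancel_left, norm_smul, mul_pow, Real.norm_eq_abs, sq_abs]

variable {D X : Set H} {f h : H → ℝ} {f' : H → H} {L μ Fstar : ℝ} {x : ℕ → H}

lemma IsFISTA.fistaEstimates {b : ℝ} (hx : IsFISTA D h f' (1 / L) (3 * b) x) (hb : 0 ≤ b)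
    (hL : 0 < L) (hμ : 0 < μ) (hf : ConvexOn ℝ Set.univ f)
    (hf' : ∀ z, HasFDerivAt f (innerSL ℝ (f' z)) z) (hlip : LipschitzWith (Real.toNNReal L) f')
    (hh : ConvexOn ℝ D h) (hX : X.Nonempty) (hXD : X ⊆ D) (hFX : ∀ z ∈ X, f z + h z = Fstar)
    (hgrowth : ∀ z ∈ D, μ / 2 * infDist z X ^ 2 ≤ f z + h z - Fstar) :
    FISTAEstimates b (1 / √(μ / L)) (fun n ↦ 2 / L * (f (x n) + h (x n) - Fstar))
      (fun n ↦ ‖x n - x (n - 1)‖) (fun n ↦ infDist (x n) X) := by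
  have hstep (n : ℕ) {u : H} (hu : u ∈ D) := forward_backward_le hL hf hf' hlip hh
    (hx.mem (n + 1)) (hx.isMinOn n) hu
  refine ⟨by simp, fun n ↦ infDist_nonneg, fun n ↦ ?_, fun n ↦ ?_, fun n ↦ ?_, fun n ↦ ?_⟩
  · simpa [Real.dist_eq, dist_eq_norm] using (lipschitz_infDist_pt X).dist_le_mul (x n) (x (n - 1))
  · rw [div_pow, Real.sq_sqrt (by positivity)]
    calc infDist (x n) X ^ 2 = 2 / μ * (μ / 2 * infDist (x n) X ^ 2) := by field_simp
      _ ≤ 2 / μ * (f (x n) + h (x n) - Fstar) := by gcongr; exact hgrowth _ (hx.mem n)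
      _ = 1 ^ 2 / (μ / L) * (2 / L * (f (x n) + h (x n) - Fstar)) := by field_simp
  · have := hstep n (hx.mem n)
    rw [sq_norm_fistaExtrapolation_sub] at this
    rw [Nat.add_sub_cancel]
    linarith
  · refine add_infDist_sq_sub_le_of_extrapolation hX (by positivity) fun p hp ↦ ?_
    have := hstep n (hXD hp)
    rw [hFX p hp, fistaExtrapolation] at this
    linarith

theorem fista_global_quadratic_growth_rate_general {α : ℝ} (hα : 4 ≤ α) (hL : 0 < L) (hμ : 0 < μ)
    (hκ : μ / L ≤ 1 / 10000) (hf : ConvexOn ℝ Set.univ f)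
    (hf' : ∀ z, HasFDerivAt f (innerSL ℝ (f' z)) z) (hlip : LipschitzWith (Real.toNNReal L) f')
    (hh : ConvexOn ℝ D h) (hX : X.Nonempty) (hXD : X ⊆ D) (hFX : ∀ z ∈ X, f z + h z = Fstar)
    (hgrowth : ∀ z ∈ D, μ / 2 * infDist z X ^ 2 ≤ f z + h z - Fstar)
    (hx : IsFISTA D h f' (1 / L) α x) {n : ℕ} (hn : 3 * α / √(μ / L) ≤ n) :
    f (x n) + h (x n) - Fstar ≤
      (9 / 4) * Real.exp (-2) * (f (x 0) + h (x 0) - Fstar) *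
        (8 * Real.exp 1 / (3 * √(μ / L)) * α) ^ ((2 * α) / 3) * (n : ℝ) ^ (-(2 * α) / 3) := by
  obtain ⟨b, rfl⟩ : ∃ b, α = 3 * b := ⟨α / 3, by ring⟩
  have hsqrt : 0 < √(μ / L) := by positivity
  have hq : 100 ≤ 1 / √(μ / L) := by
    have : √(μ / L) ≤ 1 / 100 := (Real.sqrt_le_left (by norm_num)).mpr (hκ.trans (by norm_num))
    rw [le_div_iff₀ hsqrt]
    linarith
  have hrate := (hx.fistaEstimates (by linarith) hL hμ hf hf' hlip hh hX hXD hFX hgrowth).value_le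
    (by linarith) hq (n := n) (by convert hn using 1; ring)
  rw [show 8 * Real.exp 1 / (3 * √(μ / L)) * (3 * b) = 8 * Real.exp 1 * b * (1 / √(μ / L)) by
      field_simp, show 2 * (3 * b) / 3 = 2 * b by ring, show -(2 * (3 * b)) / 3 = -(2 * b) by ring]
  refine le_of_mul_le_mul_left (hrate.trans_eq ?_) (show 0 < 2 / L by positivity)
  ring

end FISTA

/-- FISTA under a global quadratic growth condition `G²_μ`: for `α ≥ 3 + 3/√2` there is a
threshold `κ₀ > 0` such that whenever the condition number `κ = μ/L` satisfies
`0 < κ ≤ κ₀`, the FISTA iterates with step `s = 1/L` satisfy, for all `n ≥ 3α/√κ`,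
`F(xₙ) - F* ≤ (9/4) e⁻² M₀ (8eα/(3√κ))^{2α/3} n^{-2α/3}`, where `M₀ = F(x₀) - F*`. -/
theorem fista_global_quadratic_growth_rate (α : ℝ) (hα : 3 + 3 / Real.sqrt 2 ≤ α) :
    ∃ κ₀ : ℝ, 0 < κ₀ ∧
      ∀ (H : Type u) [NormedAddCommGroup H] [InnerProductSpace ℝ H] [CompleteSpace H]
        (f h : H → ℝ) (L μ : ℝ), 0 < L → 0 < μ →
      ∀ f' : H → H,
        ConvexOn ℝ Set.univ f →
        (∀ z : H, HasGradientAt f (f' z) z) →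
        LipschitzWith (Real.toNNReal L) f' →
        ConvexOn ℝ Set.univ h →
        LowerSemicontinuous h →
      ∀ F : H → ℝ, (∀ z : H, F z = f z + h z) →
        Tendsto F (Bornology.cobounded H) atTop →
      ∀ Xstar : Set H, Xstar = {z : H | ∀ w : H, F z ≤ F w} → Xstar.Nonempty →
      ∀ Fstar : ℝ, (∀ z ∈ Xstar, F z = Fstar) →
        -- global quadratic growth condition `G²_μ`
        (∀ z : H, μ / 2 * infDist z Xstar ^ 2 ≤ F z - Fstar) →
      ∀ x y z : ℕ → H,
        (∀ n : ℕ, y n = x n + ((n : ℝ) / ((n : ℝ) + α)) • (x n - x (n - 1))) →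
        (∀ n : ℕ, z n = y n - (1 / L) • f' (y n)) →
        (∀ n : ℕ, ∀ w : H,
          (1 / L) * h (x (n + 1)) + ‖x (n + 1) - z n‖ ^ 2 / 2
            ≤ (1 / L) * h w + ‖w - z n‖ ^ 2 / 2) →
        0 < μ / L → μ / L ≤ κ₀ →
        ∀ n : ℕ, 3 * α / Real.sqrt (μ / L) ≤ (n : ℝ) →
          F (x n) - Fstar ≤
            (9 / 4) * Real.exp (-2) * (F (x 0) - Fstar) *
              (8 * Real.exp 1 / (3 * Real.sqrt (μ / L)) * α) ^ ((2 * α) / 3) *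
              (n : ℝ) ^ (-(2 * α) / 3) := by
  refine ⟨1 / 10000, by norm_num, ?_⟩
  intro H _ _ _ f h L μ hL hμ f' hf hf' hlip hh _ F hF _ X _ hXne Fstar hFX hgrowth x y z hy hz
    hprox _ hκ n hn
  obtain rfl : F = fun w ↦ f w + h w := funext hF
  obtain rfl : y = fistaExtrapolation α x := funext hy
  have hα' : 4 ≤ α := by
    have : 1 ≤ 3 / √2 := by
      rw [le_div_iff₀ (by positivity), one_mul]
      exact (Real.sqrt_le_left (by norm_num)).mpr (by norm_num)
    linarith
  exact fista_global_quadratic_growth_rate_general hα' hL hμ hκ hf hf' hlip hh hXne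
    (Set.subset_univ X) hFX (fun w _ ↦ hgrowth w)
    ⟨fun _ ↦ Set.mem_univ _, fun n ↦ isMinOn_univ_iff.mpr (hz n ▸ hprox n)⟩ hn
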